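/- Let M₁ = M(a+1, b) and M₂ = M(c+1, d) be indecomposable representations of Q, with corresponding segments γ₁ = γ(a,b) and γ₂ = γ(c,d) in P(Q), and suppose there is a non-split short exact sequence 0 → M₁ → E → M₂ → 0 in rep Q. Then the following are equivalent: (1) Hom(M₁, M₂) ≠ 0; (2) E is decomposable; (3) γ₁ and γ₂ cross and the slope of γ₂ is larger than the slope of γ₁. -/

import Mathlib

open scoped Classical

noncomputable section

namespace CambrianA

/-! ### Combinatorics of a type `A_{n+2}` quiver.

Vertices are `1, …, n+2`.  For `1 ≤ i ≤ n+1`, `ε i = true` means that the arrow between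
`i` and `i+1` is oriented `i → i+1` (`i` is *upper-barred*), and `ε i = false` means it is
oriented `(i+1) → i` (`i` is *lower-barred*). -/

/-- `MaxIncr n ε i j` : the path `i → i+1 → ⋯ → j` is a maximal increasing path of `Q`. -/
def MaxIncr (n : ℕ) (ε : ℕ → Bool) (i j : ℕ) : Prop :=
  1 ≤ i ∧ i ≤ j ∧ j ≤ n + 2 ∧ (∀ ℓ, i ≤ ℓ → ℓ < j → ε ℓ = true) ∧
    (i = 1 ∨ ε (i - 1) = false) ∧ (j = n + 2 ∨ ε j = false)

/-- `MaxDecr n ε i j` : the path `i → i-1 → ⋯ → j` is a maximal decreasing path of `Q`. -/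
def MaxDecr (n : ℕ) (ε : ℕ → Bool) (i j : ℕ) : Prop :=
  1 ≤ j ∧ j ≤ i ∧ i ≤ n + 2 ∧ (∀ ℓ, j ≤ ℓ → ℓ < i → ε ℓ = false) ∧
    (i = n + 2 ∨ ε i = true) ∧ (j = 1 ∨ ε (j - 1) = true)

/-- Vertices of the polygon lying on the lower boundary: `0`, `n+2` and lower-barred ones. -/
def LowerVertex (n : ℕ) (ε : ℕ → Bool) (x : ℕ) : Prop :=
  x = 0 ∨ x = n + 2 ∨ (1 ≤ x ∧ x ≤ n + 1 ∧ ε x = false)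

/-- Vertices of the polygon lying on the upper boundary: `0`, `n+2` and upper-barred ones. -/
def UpperVertex (n : ℕ) (ε : ℕ → Bool) (x : ℕ) : Prop :=
  x = 0 ∨ x = n + 2 ∨ (1 ≤ x ∧ x ≤ n + 1 ∧ ε x = true)

/-- `(a,b)` is a lower boundary edge: `a < b` are consecutive lower vertices. -/
def LowerEdge (n : ℕ) (ε : ℕ → Bool) (a b : ℕ) : Prop :=
  LowerVertex n ε a ∧ LowerVertex n ε b ∧ a < b ∧
    ∀ c, LowerVertex n ε c → ¬(a < c ∧ c < b)

/-- `(a,b)` is an upper boundary edge: `a < b` are consecutive upper vertices. -/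
def UpperEdge (n : ℕ) (ε : ℕ → Bool) (a b : ℕ) : Prop :=
  UpperVertex n ε a ∧ UpperVertex n ε b ∧ a < b ∧
    ∀ c, UpperVertex n ε c → ¬(a < c ∧ c < b)

def BoundaryEdge (n : ℕ) (ε : ℕ → Bool) (a b : ℕ) : Prop :=
  LowerEdge n ε a b ∨ UpperEdge n ε a b

/-- `IsHook n ε a lo hi` : the hook of the arrow of `Q` between `a` and `a+1` is the
maximal path supported on the interval `[lo, hi]`.
If `ε a = true` (arrow `a → a+1`, source `a`), the hook is the maximal decreasing path
starting at `a`; if `ε a = false` (arrow `a+1 → a`, source `a+1`), the hook is the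
maximal increasing path starting at `a+1`. -/
def IsHook (n : ℕ) (ε : ℕ → Bool) (a lo hi : ℕ) : Prop :=
  if ε a = true then
    hi = a ∧ 1 ≤ lo ∧ lo ≤ a ∧ (∀ ℓ, lo ≤ ℓ → ℓ < a → ε ℓ = false) ∧
      (lo = 1 ∨ ε (lo - 1) = true)
  else
    lo = a + 1 ∧ a + 1 ≤ hi ∧ hi ≤ n + 2 ∧ (∀ ℓ, a + 1 ≤ ℓ → ℓ < hi → ε ℓ = true) ∧
      (hi = n + 2 ∨ ε hi = false)

/-- `IsCohook n ε a lo hi` : the cohook of the arrow of `Q` between `a` and `a+1` is the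
maximal path supported on the interval `[lo, hi]`, ending at the target of the arrow. -/
def IsCohook (n : ℕ) (ε : ℕ → Bool) (a lo hi : ℕ) : Prop :=
  if ε a = true then
    lo = a + 1 ∧ a + 1 ≤ hi ∧ hi ≤ n + 2 ∧ (∀ ℓ, a + 1 ≤ ℓ → ℓ < hi → ε ℓ = false) ∧
      (hi = n + 2 ∨ ε hi = true)
  else
    hi = a ∧ 1 ≤ lo ∧ lo ≤ a ∧ (∀ ℓ, lo ≤ ℓ → ℓ < a → ε ℓ = true) ∧
      (lo = 1 ∨ ε (lo - 1) = false)

/-- Counterclockwise neighbor `R⁻¹(ℓ)` of the vertex `ℓ` of the polygon `P(Q)`, for the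
cyclic order `0`, lower-barred vertices increasing, `n+2`, upper-barred vertices
decreasing. -/
def Rinv (n : ℕ) (ε : ℕ → Bool) (ℓ : ℕ) : ℕ :=
  if ℓ = n + 2 then sSup ({0} ∪ {x | 1 ≤ x ∧ x ≤ n + 1 ∧ ε x = true})
  else if 1 ≤ ℓ ∧ ℓ ≤ n + 1 ∧ ε ℓ = true then
    sSup ({0} ∪ {x | 1 ≤ x ∧ x < ℓ ∧ ε x = true})
  else
    sInf ({n + 2} ∪ {x | ℓ < x ∧ x ≤ n + 1 ∧ ε x = false})

/-- `γ(i′,j′)` is a pivot of `γ(i,j)`. -/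
def IsPivot (n : ℕ) (ε : ℕ → Bool) (i j i' j' : ℕ) : Prop :=
  (i' = Rinv n ε i ∧ j' = j ∧ Rinv n ε i < j) ∨
    (i' = i ∧ j' = Rinv n ε j ∧ i < Rinv n ε j)

/-! ### Geometry of the polygon `P(Q)`.

The plane is identified with `ℂ`; `p x` is the vertex of the polygon labeled `x`,
for `0 ≤ x ≤ n+2`. -/

/-- The hypotheses on the points `p 0, …, p (n+2)` realizing the polygon `P(Q)`:
strictly increasing `x`-coordinates; `p 0` and `p (n+2)` on a common horizontal line `L`;
upper-barred vertices above `L`, lower-barred vertices below `L`; convex position. -/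
def PolyPts (n : ℕ) (ε : ℕ → Bool) (p : ℕ → ℂ) : Prop :=
  (∀ a b, a < b → b ≤ n + 2 → (p a).re < (p b).re) ∧
    (p (n + 2)).im = (p 0).im ∧
    (∀ i, 1 ≤ i → i ≤ n + 1 →
      (ε i = true → (p 0).im < (p i).im) ∧ (ε i = false → (p i).im < (p 0).im)) ∧
    ∀ i, i ≤ n + 2 → p i ∉ convexHull ℝ (p '' {j | j ≤ n + 2 ∧ j ≠ i})

/-- The line segment `γ(e.1, e.2)` of the polygon. -/
def Seg (p : ℕ → ℂ) (e : ℕ × ℕ) : Set ℂ := segment ℝ (p e.1) (p e.2)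

/-- Two segments cross when they intersect in a point that is not a common endpoint. -/
def Cross (p : ℕ → ℂ) (e f : ℕ × ℕ) : Prop :=
  ∃ z, z ∈ Seg p e ∧ z ∈ Seg p f ∧
    ¬((z = p e.1 ∨ z = p e.2) ∧ (z = p f.1 ∨ z = p f.2))

/-- Slope of the segment `γ(e.1, e.2)`. -/
def slope (p : ℕ → ℂ) (e : ℕ × ℕ) : ℝ :=
  ((p e.2).im - (p e.1).im) / ((p e.2).re - (p e.1).re)

def ValidPair (n : ℕ) (e : ℕ × ℕ) : Prop := e.1 < e.2 ∧ e.2 ≤ n + 2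

/-- A triangulation of `P(Q)`: a maximal collection of pairwise noncrossing segments. -/
def IsTriangulation (n : ℕ) (p : ℕ → ℂ) (T : Finset (ℕ × ℕ)) : Prop :=
  (∀ e ∈ T, ValidPair n e) ∧ (∀ e ∈ T, ∀ f ∈ T, e ≠ f → ¬Cross p e f) ∧
    ∀ e, ValidPair n e → e ∉ T → ∃ f ∈ T, Cross p e f

/-- Cross product of two planar vectors; positive iff `(u, v)` is counterclockwise. -/
def cross2 (u v : ℂ) : ℝ := u.re * v.im - u.im * v.re

/-- Arrows of the adjacency quiver `Q(T)` of a triangulation `T`: `e → f` whenever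
`e` and `f` are sides of a common triangle of `T` and `f` follows `e` going
counterclockwise around that triangle. -/
def TriArrow (p : ℕ → ℂ) (T : Finset (ℕ × ℕ)) (e f : ℕ × ℕ) : Prop :=
  ∃ a b c : ℕ, a < b ∧ b < c ∧ (a, b) ∈ T ∧ (b, c) ∈ T ∧ (a, c) ∈ T ∧
    ((0 < cross2 (p b - p a) (p c - p a) ∧
        ((e = (a, b) ∧ f = (b, c)) ∨ (e = (b, c) ∧ f = (a, c)) ∨
          (e = (a, c) ∧ f = (a, b)))) ∨
      (cross2 (p b - p a) (p c - p a) < 0 ∧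
        ((e = (a, c) ∧ f = (b, c)) ∨ (e = (b, c) ∧ f = (a, b)) ∨
          (e = (a, b) ∧ f = (a, c)))))

/-! ### Representations of `Q` -/

/-- A finite dimensional representation of the quiver `Q` of type `A_{n+2}` over `k`.
The vector spaces are indexed by `ℕ`, and are required to vanish outside the set
`{1, …, n+2}` of vertices of `Q`.  For each `i`, `fwd i : V i → V (i+1)` is the structure
map of the arrow `i → i+1` (it is required to vanish when the arrow is oriented in the
other direction, i.e. `ε i = false`) and `bwd i : V (i+1) → V i` is the structure map of
the arrow `i+1 → i` (required to vanish when `ε i = true`). -/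
structure ARep (k : Type) [Field k] (n : ℕ) (ε : ℕ → Bool) where
  V : ℕ → Type
  [acg : ∀ x, AddCommGroup (V x)]
  [mod : ∀ x, Module k (V x)]
  [fdim : ∀ x, FiniteDimensional k (V x)]
  triv : ∀ x, x = 0 ∨ n + 2 < x → ∀ v : V x, v = 0
  fwd : ∀ i, V i →ₗ[k] V (i + 1)
  bwd : ∀ i, V (i + 1) →ₗ[k] V i
  fwd_zero : ∀ i, ε i = false → fwd i = 0
  bwd_zero : ∀ i, ε i = true → bwd i = 0

attribute [instance] ARep.acg ARep.mod ARep.fdim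

variable {k : Type} [Field k] {n : ℕ} {ε : ℕ → Bool}

/-- Morphisms of representations. -/
@[ext]
structure ARep.Hom (M N : ARep k n ε) where
  app : ∀ x, M.V x →ₗ[k] N.V x
  comm_fwd : ∀ i (v : M.V i), app (i + 1) (M.fwd i v) = N.fwd i (app i v)
  comm_bwd : ∀ i (v : M.V (i + 1)), app i (M.bwd i v) = N.bwd i (app (i + 1) v)

/-- The identity morphism. -/
def ARep.Hom.id (M : ARep k n ε) : M.Hom M :=
  ⟨fun _ => LinearMap.id, fun _ _ => rfl, fun _ _ => rfl⟩

/-- Composition of morphisms. -/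
def ARep.Hom.comp {M N P : ARep k n ε} (g : N.Hom P) (f : M.Hom N) : M.Hom P where
  app x := (g.app x).comp (f.app x)
  comm_fwd i v := by simp only [LinearMap.comp_apply, f.comm_fwd, g.comm_fwd]
  comm_bwd i v := by simp only [LinearMap.comp_apply, f.comm_bwd, g.comm_bwd]

/-- Sum of two morphisms. -/
def ARep.Hom.add {M N : ARep k n ε} (f g : M.Hom N) : M.Hom N where
  app x := f.app x + g.app x
  comm_fwd i v := by
    simp only [LinearMap.add_apply, f.comm_fwd, g.comm_fwd, map_add]
  comm_bwd i v := by
    simp only [LinearMap.add_apply, f.comm_bwd, g.comm_bwd, map_add]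

/-- Scalar multiple of a morphism. -/
def ARep.Hom.smul {M N : ARep k n ε} (c : k) (f : M.Hom N) : M.Hom N where
  app x := c • f.app x
  comm_fwd i v := by simp only [LinearMap.smul_apply, f.comm_fwd, map_smul]
  comm_bwd i v := by simp only [LinearMap.smul_apply, f.comm_bwd, map_smul]

/-- Isomorphism of representations. -/
def ARep.Iso (M N : ARep k n ε) : Prop :=
  ∃ f : M.Hom N, ∀ x, Function.Bijective (f.app x)

/-- The zero representation(s). -/
def ARep.IsZero (M : ARep k n ε) : Prop := ∀ x, ∀ v : M.V x, v = 0

/-- The support of a representation. -/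
def ARep.supp (M : ARep k n ε) : Set ℕ := {x | ∃ v : M.V x, v ≠ 0}

/-- Direct sum of two representations. -/
def ARep.dsum (M N : ARep k n ε) : ARep k n ε where
  V x := M.V x × N.V x
  acg _ := by infer_instance
  mod _ := by infer_instance
  fdim _ := by infer_instance
  triv x hx v := by
    have h1 := M.triv x hx v.1
    have h2 := N.triv x hx v.2
    exact Prod.ext h1 h2
  fwd i := (M.fwd i).prodMap (N.fwd i)
  bwd i := (M.bwd i).prodMap (N.bwd i)
  fwd_zero i h := by
    show (M.fwd i).prodMap (N.fwd i) = 0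
    rw [M.fwd_zero i h, N.fwd_zero i h]
    apply LinearMap.ext; rintro ⟨a, b⟩; simp
  bwd_zero i h := by
    show (M.bwd i).prodMap (N.bwd i) = 0
    rw [M.bwd_zero i h, N.bwd_zero i h]
    apply LinearMap.ext; rintro ⟨a, b⟩; simp

/-- One dimensional space `k` if `P` holds, `0` otherwise (as a submodule of `k`). -/
def fiber (k : Type) [Field k] (P : Prop) : Submodule k k := if P then ⊤ else ⊥

/-- The canonical map `fiber k P → fiber k Q` : "identity" if `P ∧ Q`, zero otherwise. -/
def fiberMap (k : Type) [Field k] (P Q : Prop) : fiber k P →ₗ[k] fiber k Q :=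
  if h : P ∧ Q then
    { toFun := fun v => ⟨(v : k), by
        rw [show fiber k Q = ⊤ from if_pos h.2]; exact Submodule.mem_top⟩
      map_add' := fun _ _ => rfl
      map_smul' := fun _ _ => rfl }
  else 0

/-- The zero representation. -/
def zeroRep (k : Type) [Field k] (n : ℕ) (ε : ℕ → Bool) : ARep k n ε where
  V _ := ↥(fiber k False)
  acg _ := by infer_instance
  mod _ := by infer_instance
  fdim _ := by infer_instance
  triv x _ v := by
    have hfib : fiber k False = ⊥ := if_neg (fun h : False => h.elim)
    obtain ⟨w, hw⟩ := v
    apply Subtype.ext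
    have hb : w ∈ (⊥ : Submodule k k) := hfib ▸ hw
    exact (Submodule.mem_bot k).1 hb
  fwd _ := 0
  bwd _ := 0
  fwd_zero _ _ := rfl
  bwd_zero _ _ := rfl

/-- The condition for a vertex `x` to be in the support of the interval representation
`M(i,j)`. -/
def SuppCond (n i j x : ℕ) : Prop := i ≤ x ∧ x ≤ j ∧ 1 ≤ x ∧ x ≤ n + 2

/-- The interval (string) representation `M(i,j)` of `Q`: one dimensional at each vertex
`x` with `i ≤ x ≤ j`, zero elsewhere, with identity maps on all arrows whose endpoints
both lie in `[i,j]`. -/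
def intervalRep (k : Type) [Field k] (n : ℕ) (ε : ℕ → Bool) (i j : ℕ) : ARep k n ε where
  V x := ↥(fiber k (SuppCond n i j x))
  acg _ := by infer_instance
  mod _ := by infer_instance
  fdim _ := by infer_instance
  triv x hx v := by
    have hP : ¬SuppCond n i j x := by simp only [SuppCond]; omega
    have hfib : fiber k (SuppCond n i j x) = ⊥ := if_neg hP
    obtain ⟨w, hw⟩ := v
    apply Subtype.ext
    have hb : w ∈ (⊥ : Submodule k k) := hfib ▸ hw
    exact (Submodule.mem_bot k).1 hb
  fwd ℓ :=
    if ε ℓ = true then fiberMap k (SuppCond n i j ℓ) (SuppCond n i j (ℓ + 1)) else 0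
  bwd ℓ :=
    if ε ℓ = true then 0 else fiberMap k (SuppCond n i j (ℓ + 1)) (SuppCond n i j ℓ)
  fwd_zero ℓ h := by simp [h]
  bwd_zero ℓ h := by simp [h]

/-- Direct sum of a list of representations. -/
def dsumList (k : Type) [Field k] (n : ℕ) (ε : ℕ → Bool) :
    List (ARep k n ε) → ARep k n ε
  | [] => zeroRep k n ε
  | M :: L => M.dsum (dsumList k n ε L)

/-- Indecomposable representations. -/
def ARep.Indec (M : ARep k n ε) : Prop :=
  ¬M.IsZero ∧ ∀ A B : ARep k n ε, M.Iso (A.dsum B) → A.IsZero ∨ B.IsZero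

/-- `A` is a direct summand of `T`. -/
def ARep.IsSummand (A T : ARep k n ε) : Prop := ∃ B : ARep k n ε, T.Iso (A.dsum B)

/-- A representation is basic when it has no repeated indecomposable direct summand. -/
def ARep.Basic (T : ARep k n ε) : Prop :=
  ∀ A : ARep k n ε, A.Indec → ¬(A.dsum A).IsSummand T

/-- A short exact sequence `0 → B → E → A → 0`. -/
structure SES (B A : ARep k n ε) where
  E : ARep k n ε
  ι : B.Hom E
  π : E.Hom A
  inj : ∀ x, Function.Injective (ι.app x)
  surj : ∀ x, Function.Surjective (π.app x)
  exct : ∀ x (v : E.V x), π.app x v = 0 ↔ ∃ u, ι.app x u = v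

/-- A short exact sequence splits. -/
def SES.Splits {B A : ARep k n ε} (σ : SES B A) : Prop :=
  ∃ r : σ.E.Hom B, ∀ x (v : B.V x), r.app x (σ.ι.app x v) = v

/-- `Ext¹(A, B) = 0` : every short exact sequence `0 → B → E → A → 0` splits. -/
def ExtZero (A B : ARep k n ε) : Prop := ∀ σ : SES B A, σ.Splits

/-- `Ext¹(A,B) ≅ k`, generated by (the class of) a short exact sequence
`0 → B → E → A → 0` with indecomposable middle term `E`: there is a non-split such
sequence `σ` with `σ.E` indecomposable such that every non-split sequence is equivalent
to a nonzero scalar multiple of `σ`. -/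
def ExtOneDimIndecMid (A B : ARep k n ε) : Prop :=
  ∃ σ : SES B A, ¬σ.Splits ∧ σ.E.Indec ∧
    ∀ τ : SES B A, ¬τ.Splits → ∃ c : k, c ≠ 0 ∧
      ∃ φ : σ.E.Hom τ.E, (∀ x, Function.Bijective (φ.app x)) ∧
        (∀ x (v : B.V x), φ.app x (σ.ι.app x v) = τ.ι.app x v) ∧
        (∀ x (v : σ.E.V x), τ.π.app x (φ.app x v) = c • σ.π.app x v)

/-- Almost rigid representations. -/
def AlmostRigid (T : ARep k n ε) : Prop :=
  T.Basic ∧ ∀ A B : ARep k n ε, A.Indec → B.Indec → A.IsSummand T → B.IsSummand T →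
    ExtZero A B ∨ ExtOneDimIndecMid A B

/-- Maximal almost rigid representations. -/
def MaxAlmostRigid (T : ARep k n ε) : Prop :=
  AlmostRigid T ∧ ∀ M : ARep k n ε, ¬M.IsZero → ¬AlmostRigid (T.dsum M)

/-- `f` is a section. -/
def ARep.Hom.IsSection {M N : ARep k n ε} (f : M.Hom N) : Prop :=
  ∃ g : N.Hom M, ∀ x (v : M.V x), g.app x (f.app x v) = v

/-- `f` is a retraction. -/
def ARep.Hom.IsRetraction {M N : ARep k n ε} (f : M.Hom N) : Prop :=
  ∃ g : N.Hom M, ∀ x (v : N.V x), f.app x (g.app x v) = v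

/-- Irreducible morphisms: `f` is neither a section nor a retraction, and in every
factorization `f = g ∘ h` either `h` is a section or `g` is a retraction. -/
def ARep.Hom.Irred {M N : ARep k n ε} (f : M.Hom N) : Prop :=
  ¬f.IsSection ∧ ¬f.IsRetraction ∧
    ∀ (Z : ARep k n ε) (h : M.Hom Z) (g : Z.Hom N),
      (∀ x (v : M.V x), f.app x v = g.app x (h.app x v)) → h.IsSection ∨ g.IsRetraction

/-- Subrepresentations : families of subspaces closed under the structure maps. -/
structure Subrep (M : ARep k n ε) where
  U : ∀ x, Submodule k (M.V x)
  fwd_mem : ∀ i, ∀ v ∈ U i, M.fwd i v ∈ U (i + 1)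
  bwd_mem : ∀ i, ∀ v ∈ U (i + 1), M.bwd i v ∈ U i

/-- The central charge `Z(M) = Σ_{x=1}^{n+2} dim_k(M_x) · (p_x − p_{x−1})`. -/
def charge (p : ℕ → ℂ) (M : ARep k n ε) : ℂ :=
  ∑ x ∈ Finset.Icc 1 (n + 2), (Module.finrank k (M.V x) : ℂ) * (p x - p (x - 1))

/-- The central charge of a subrepresentation. -/
def subCharge (p : ℕ → ℂ) {M : ARep k n ε} (L : Subrep M) : ℂ :=
  ∑ x ∈ Finset.Icc 1 (n + 2), (Module.finrank k (L.U x) : ℂ) * (p x - p (x - 1))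

/-- The representation `F(T) = ⊕_{γ(a,b) ∈ T} M(a+1, b)` attached to a collection `T` of
segments of the polygon `P(Q)`. -/
def FRep (k : Type) [Field k] (n : ℕ) (ε : ℕ → Bool) (T : Finset (ℕ × ℕ)) : ARep k n ε :=
  dsumList k n ε (T.toList.map fun e => intervalRep k n ε (e.1 + 1) e.2)

end CambrianA

namespace CambrianA

section Helpers

variable {k : Type} [Field k] {n : ℕ} {ε : ℕ → Bool}

theorem fiber_zero {P : Prop} (h : ¬P) (v : fiber k P) : v = 0 := by
  obtain ⟨w, hw⟩ := v
  apply Subtype.ext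
  rw [fiber, if_neg h] at hw
  exact (Submodule.mem_bot k).1 hw

theorem fiber_mem {P : Prop} (h : P) (c : k) : c ∈ fiber k P := by
  rw [fiber, if_pos h]; exact Submodule.mem_top

/-- The canonical generator of the fiber at `x` of an interval representation. -/
def one (k : Type) [Field k] (n : ℕ) (ε : ℕ → Bool) (i j x : ℕ) :
    (intervalRep k n ε i j).V x :=
  if h : SuppCond n i j x then (⟨1, fiber_mem h 1⟩ : fiber k (SuppCond n i j x)) else
    (0 : fiber k (SuppCond n i j x))

/-- The coordinate on the fiber at `x` of an interval representation. -/
def coord (k : Type) [Field k] (n : ℕ) (ε : ℕ → Bool) (i j x : ℕ) :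
    (intervalRep k n ε i j).V x →ₗ[k] k :=
  (fiber k (SuppCond n i j x)).subtype

theorem coord_one {i j x : ℕ} (h : SuppCond n i j x) :
    coord k n ε i j x (one k n ε i j x) = 1 := by
  have : one k n ε i j x = (⟨1, fiber_mem h 1⟩ : fiber k (SuppCond n i j x)) := dif_pos h
  rw [this]; rfl

theorem V_zero {i j x : ℕ} (h : ¬SuppCond n i j x) (v : (intervalRep k n ε i j).V x) :
    v = 0 := fiber_zero h v

theorem coord_inj {i j x : ℕ} {v w : (intervalRep k n ε i j).V x}
    (h : coord k n ε i j x v = coord k n ε i j x w) : v = w :=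
  Subtype.ext h

theorem eq_smul_one {i j x : ℕ} (v : (intervalRep k n ε i j).V x) :
    v = coord k n ε i j x v • one k n ε i j x := by
  by_cases h : SuppCond n i j x
  · apply coord_inj
    rw [map_smul, coord_one h]; simp
  · rw [V_zero h v]; simp

theorem coord_fwd {i j l : ℕ} (he : ε l = true) (h : SuppCond n i j l)
    (h' : SuppCond n i j (l + 1)) (v : (intervalRep k n ε i j).V l) :
    coord k n ε i j (l + 1) ((intervalRep k n ε i j).fwd l v) = coord k n ε i j l v := by
  have : (intervalRep k n ε i j).fwd l =
      fiberMap k (SuppCond n i j l) (SuppCond n i j (l + 1)) := if_pos he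
  rw [this]
  unfold fiberMap
  rw [dif_pos ⟨h, h'⟩]; rfl

theorem coord_bwd {i j l : ℕ} (he : ε l = false) (h : SuppCond n i j l)
    (h' : SuppCond n i j (l + 1)) (v : (intervalRep k n ε i j).V (l + 1)) :
    coord k n ε i j l ((intervalRep k n ε i j).bwd l v) = coord k n ε i j (l + 1) v := by
  have : (intervalRep k n ε i j).bwd l =
      fiberMap k (SuppCond n i j (l + 1)) (SuppCond n i j l) := if_neg (by simp [he])
  rw [this]
  unfold fiberMap
  rw [dif_pos ⟨h', h⟩]; rfl

theorem fwd_one {i j l : ℕ} (he : ε l = true) (h : SuppCond n i j l) :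
    (intervalRep k n ε i j).fwd l (one k n ε i j l) = one k n ε i j (l + 1) := by
  by_cases h' : SuppCond n i j (l + 1)
  · apply coord_inj
    rw [coord_fwd he h h', coord_one h, coord_one h']
  · rw [V_zero h' (one k n ε i j (l + 1))]; exact V_zero h' _

theorem bwd_one {i j l : ℕ} (he : ε l = false) (h : SuppCond n i j (l + 1)) :
    (intervalRep k n ε i j).bwd l (one k n ε i j (l + 1)) = one k n ε i j l := by
  by_cases h' : SuppCond n i j l
  · apply coord_inj
    rw [coord_bwd he h' h, coord_one h, coord_one h']
  · rw [V_zero h' (one k n ε i j l)]; exact V_zero h' _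

theorem one_ne {i j x : ℕ} (h : SuppCond n i j x) : one k n ε i j x ≠ 0 := by
  intro h0
  have := coord_one (k := k) (ε := ε) h
  rw [h0] at this; simp at this

/-- A morphism out of an interval representation, from a compatible family of vectors. -/
def ofVec (E : ARep k n ε) (i j : ℕ) (w : ∀ x, E.V x)
    (hw : ∀ x, ¬SuppCond n i j x → w x = 0)
    (hf : ∀ l, ε l = true → SuppCond n i j l → E.fwd l (w l) = w (l + 1))
    (hb : ∀ l, ε l = false → SuppCond n i j (l + 1) → E.bwd l (w (l + 1)) = w l) :
    (intervalRep k n ε i j).Hom E where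
  app x := (LinearMap.toSpanSingleton k (E.V x) (w x)).comp (coord k n ε i j x)
  comm_fwd l v := by
    simp only [LinearMap.comp_apply, LinearMap.toSpanSingleton_apply, map_smul]
    rcases he : ε l with _ | _
    · rw [E.fwd_zero l he, (intervalRep k n ε i j).fwd_zero l he]; simp
    · by_cases h : SuppCond n i j l
      · rw [hf l he h]
        by_cases h' : SuppCond n i j (l + 1)
        · rw [coord_fwd he h h']
        · rw [hw _ h']; simp
      · rw [V_zero h v]; simp
  comm_bwd l v := by
    simp only [LinearMap.comp_apply, LinearMap.toSpanSingleton_apply, map_smul]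
    rcases he : ε l with _ | _
    · by_cases h : SuppCond n i j (l + 1)
      · rw [hb l he h]
        by_cases h' : SuppCond n i j l
        · rw [coord_bwd he h' h]
        · rw [hw _ h']; simp
      · rw [V_zero h v]; simp
    · rw [E.bwd_zero l he, (intervalRep k n ε i j).bwd_zero l he]; simp

theorem ofVec_app (E : ARep k n ε) (i j : ℕ) (w : ∀ x, E.V x) (hw hf hb) (x : ℕ)
    (v : (intervalRep k n ε i j).V x) :
    (ofVec E i j w hw hf hb).app x v = coord k n ε i j x v • w x := rfl

/-- A section gives a splitting. -/
theorem splits_of_section {B A : ARep k n ε} (σ : SES B A) (s : A.Hom σ.E)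
    (hs : ∀ x v, σ.π.app x (s.app x v) = v) : σ.Splits := by
  have hex : ∀ x (v : σ.E.V x), ∃ u, σ.ι.app x u = v - s.app x (σ.π.app x v) := by
    intro x v
    rw [← σ.exct]; rw [map_sub, hs, sub_self]
  choose r hr using hex
  refine ⟨⟨fun x => ⟨⟨r x, ?_⟩, ?_⟩, ?_, ?_⟩, ?_⟩
  · intro v w
    apply σ.inj x
    rw [map_add, hr, hr, hr]; simp only [map_add]; abel
  · intro c v
    apply σ.inj x
    rw [map_smul, hr, hr]; simp only [map_smul, RingHom.id_apply, smul_sub]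
  · intro i v
    apply σ.inj (i + 1)
    change σ.ι.app _ (r _ _) = σ.ι.app _ (B.fwd _ (r _ _))
    rw [σ.ι.comm_fwd, hr, hr, map_sub, σ.π.comm_fwd, s.comm_fwd]
  · intro i v
    apply σ.inj i
    change σ.ι.app _ (r _ _) = σ.ι.app _ (B.bwd _ (r _ _))
    rw [σ.ι.comm_bwd, hr, hr, map_sub, σ.π.comm_bwd, s.comm_bwd]
  · intro x v
    apply σ.inj x
    change σ.ι.app _ (r _ _) = _
    rw [hr, (σ.exct x _).2 ⟨v, rfl⟩]; simp

theorem Iso_symm {M N : ARep k n ε} (h : M.Iso N) : N.Iso M := by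
  obtain ⟨f, hf⟩ := h
  let e : ∀ x, M.V x ≃ₗ[k] N.V x := fun x => LinearEquiv.ofBijective (f.app x) (hf x)
  have he : ∀ x v, f.app x ((e x).symm v) = v := fun x v => (e x).apply_symm_apply v
  refine ⟨⟨fun x => (e x).symm.toLinearMap, ?_, ?_⟩, fun x => (e x).symm.bijective⟩
  · intro i v
    apply (hf (i + 1)).1
    simp only [LinearEquiv.coe_coe]
    rw [he, f.comm_fwd, he]
  · intro i v
    apply (hf i).1
    simp only [LinearEquiv.coe_coe]
    rw [he, f.comm_bwd, he]

/-- `w`, `z` form a basis (when their indicators are true; they vanish otherwise). -/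
def IsB {V : Type} [AddCommGroup V] [Module k V] (P Q : Prop) (w z : V) : Prop :=
  (¬P → w = 0) ∧ (¬Q → z = 0) ∧ (∀ v : V, ∃ α β : k, v = α • w + β • z) ∧
    ∀ α β : k, α • w + β • z = 0 → (P → α = 0) ∧ (Q → β = 0)

theorem IsB.swap {V : Type} [AddCommGroup V] [Module k V] {P Q : Prop} {w z : V}
    (h : IsB (k := k) P Q w z) : IsB (k := k) Q P z w := by
  obtain ⟨h1, h2, h3, h4⟩ := h
  refine ⟨h2, h1, fun v => ?_, fun α β h => ?_⟩
  · obtain ⟨α, β, h⟩ := h3 v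
    exact ⟨β, α, by rw [h, add_comm]⟩
  · rw [add_comm] at h
    exact (h4 β α h).symm

theorem IsB.shear {V : Type} [AddCommGroup V] [Module k V] {w z : V} {μ : k} (hμ : μ ≠ 0)
    (h : IsB (k := k) True True w z) : IsB (k := k) True True z (z + μ • w) := by
  obtain ⟨h1, h2, h3, h4⟩ := h
  refine ⟨by simp, by simp, fun v => ?_, fun α β h => ?_⟩
  · obtain ⟨α, β, h⟩ := h3 v
    refine ⟨β - α / μ, α / μ, ?_⟩
    rw [h, smul_add, smul_smul, div_mul_cancel₀ _ hμ, sub_smul]; abel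
  · have := h4 (β * μ) (α + β) (by rw [← h, smul_add, smul_smul, add_smul]; abel)
    have hβ : β = 0 := by
      rcases mul_eq_zero.1 (this.1 trivial) with h | h
      · exact h
      · exact absurd h hμ
    have := this.2 trivial
    rw [hβ, add_zero] at this
    exact ⟨fun _ => this, fun _ => hβ⟩

theorem iso_of_isB (E : ARep k n ε) {i j i' j' : ℕ} (f : (intervalRep k n ε i j).Hom E)
    (g : (intervalRep k n ε i' j').Hom E)
    (w z : ∀ x, E.V x)
    (hf : ∀ x v, f.app x v = coord k n ε i j x v • w x)
    (hg : ∀ x v, g.app x v = coord k n ε i' j' x v • z x)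
    (h : ∀ x, IsB (k := k) (SuppCond n i j x) (SuppCond n i' j' x) (w x) (z x)) :
    E.Iso ((intervalRep k n ε i j).dsum (intervalRep k n ε i' j')) := by
  apply Iso_symm
  refine ⟨⟨fun x => (f.app x).coprod (g.app x), ?_, ?_⟩, ?_⟩
  · rintro l ⟨v, v'⟩
    change f.app _ (ARep.fwd _ _ _) + g.app _ (ARep.fwd _ _ _) = E.fwd l (f.app _ _ + g.app _ _)
    rw [f.comm_fwd, g.comm_fwd, map_add]
  · rintro l ⟨v, v'⟩
    change f.app _ (ARep.bwd _ _ _) + g.app _ (ARep.bwd _ _ _) = E.bwd l (f.app _ _ + g.app _ _)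
    rw [f.comm_bwd, g.comm_bwd, map_add]
  · intro x
    obtain ⟨h1, h2, h3, h4⟩ := h x
    constructor
    · rw [injective_iff_map_eq_zero]
      rintro ⟨v, v'⟩ hv
      change f.app _ v + g.app _ v' = _ at hv
      rw [hf, hg] at hv
      have := h4 _ _ hv
      apply Prod.ext
      · by_cases hP : SuppCond n i j x
        · exact coord_inj ((this.1 hP).trans (map_zero _).symm)
        · exact V_zero hP _
      · by_cases hP : SuppCond n i' j' x
        · exact coord_inj ((this.2 hP).trans (map_zero _).symm)
        · exact V_zero hP _
    · intro v
      obtain ⟨α, β, hv⟩ := h3 v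
      refine ⟨(α • one k n ε i j x, β • one k n ε i' j' x), ?_⟩
      change f.app _ (α • one k n ε i j x) + g.app _ (β • one k n ε i' j' x) = _
      rw [hf, hg, hv]
      congr 1
      · by_cases hP : SuppCond n i j x
        · rw [map_smul, coord_one hP]; simp
        · rw [h1 hP]; simp
      · by_cases hP : SuppCond n i' j' x
        · rw [map_smul, coord_one hP]; simp
        · rw [h2 hP]; simp

/-- A thin representation with connected support is not decomposable. -/
theorem not_decomp (E : ARep k n ε) (i j : ℕ) (v : ∀ x, E.V x)
    (hspan : ∀ x (w : E.V x), ∃ c : k, w = c • v x)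
    (hz : ∀ x, ¬(i ≤ x ∧ x ≤ j) → v x = 0)
    (hnz : ∀ x, i ≤ x → x ≤ j → v x ≠ 0)
    (hf : ∀ l, ε l = true → i ≤ l → l + 1 ≤ j → E.fwd l (v l) = v (l + 1))
    (hb : ∀ l, ε l = false → i ≤ l → l + 1 ≤ j → E.bwd l (v (l + 1)) = v l)
    (A B : ARep k n ε) (h : E.Iso (A.dsum B)) : A.IsZero ∨ B.IsZero := by
  obtain ⟨f, hfb⟩ := h
  -- coordinates of the generator
  have hsp : ∀ x (p : A.V x × B.V x), ∃ c : k, p = c • (f.app x (v x) : A.V x × B.V x) := by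
    intro x p
    obtain ⟨w, hw⟩ := (hfb x).2 p
    obtain ⟨c, hc⟩ := hspan x w
    exact ⟨c, by rw [← hw, hc, map_smul]⟩
  set P : ∀ x, A.V x × B.V x := fun x => f.app x (v x) with hP
  have hPz : ∀ x, ¬(i ≤ x ∧ x ≤ j) → P x = 0 := by
    intro x hx
    simp only [hP]; rw [hz x hx, map_zero]; rfl
  have hPnz : ∀ x, i ≤ x → x ≤ j → P x ≠ 0 := by
    intro x h1 h2 h0
    apply hnz x h1 h2
    apply (hfb x).1
    rw [map_zero]; exact h0
  have hPf : ∀ l, ε l = true → i ≤ l → l + 1 ≤ j →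
      A.fwd l (P l).1 = (P (l + 1)).1 ∧ B.fwd l (P l).2 = (P (l + 1)).2 := by
    intro l h1 h2 h3
    have := f.comm_fwd l (v l)
    rw [hf l h1 h2 h3] at this
    exact ⟨(congrArg Prod.fst this).symm, (congrArg Prod.snd this).symm⟩
  have hPb : ∀ l, ε l = false → i ≤ l → l + 1 ≤ j →
      A.bwd l (P (l + 1)).1 = (P l).1 ∧ B.bwd l (P (l + 1)).2 = (P l).2 := by
    intro l h1 h2 h3
    have := f.comm_bwd l (v (l + 1))
    rw [hb l h1 h2 h3] at this
    exact ⟨(congrArg Prod.fst this).symm, (congrArg Prod.snd this).symm⟩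
  have hone : ∀ x, (P x).1 = 0 ∨ (P x).2 = 0 := by
    intro x
    obtain ⟨c, hc⟩ := hsp x ((P x).1, 0)
    have h1 : (P x).1 = c • (P x).1 := congrArg Prod.fst hc
    have h2 : (0 : B.V x) = c • (P x).2 := congrArg Prod.snd hc
    by_cases hc0 : c = 0
    · left; rw [h1, hc0, zero_smul]
    · right
      exact (smul_eq_zero.1 h2.symm).resolve_left hc0
  have hex : ∀ x, i ≤ x → x ≤ j → ((P x).1 = 0 ↔ (P x).2 ≠ 0) := by
    intro x h1 h2
    have h3 := hPnz x h1 h2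
    constructor
    · intro h4 h5; exact h3 (Prod.ext h4 h5)
    · intro h4; exact (hone x).resolve_right h4
  have hstep : ∀ l, i ≤ l → l + 1 ≤ j → ((P l).1 = 0 ↔ (P (l + 1)).1 = 0) := by
    intro l h1 h2
    have e1 := hex l h1 (by omega)
    have e2 := hex (l + 1) (by omega) h2
    rcases he : ε l with _ | _
    · obtain ⟨h3, h4⟩ := hPb l he h1 h2
      constructor
      · intro h5
        rw [e2]; intro h6
        rw [h6, map_zero] at h4
        exact (e1.1 h5) h4.symm
      · intro h5; rw [h5, map_zero] at h3; exact h3.symm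
    · obtain ⟨h3, h4⟩ := hPf l he h1 h2
      constructor
      · intro h5; rw [h5, map_zero] at h3; exact h3.symm
      · intro h5
        rw [e1]; intro h6
        rw [h6, map_zero] at h4
        exact (e2.1 h5) h4.symm
  have hall : ∀ m, i + m ≤ j → ((P i).1 = 0 ↔ (P (i + m)).1 = 0) := by
    intro m
    induction m with
    | zero => intro _; rfl
    | succ m ih =>
      intro h
      rw [ih (by omega)]
      exact hstep (i + m) (by omega) h
  by_cases h0 : (P i).1 = 0
  · left
    intro x w
    obtain ⟨c, hc⟩ := hsp x (w, 0)
    have h1 : w = c • (P x).1 := congrArg Prod.fst hc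
    by_cases hx : i ≤ x ∧ x ≤ j
    · have := (hall (x - i) (by omega)).1 h0
      rw [show i + (x - i) = x by omega] at this
      rw [h1, this, smul_zero]
    · rw [h1, hPz x hx]; simp
  · right
    intro x w
    obtain ⟨c, hc⟩ := hsp x (0, w)
    have h1 : w = c • (P x).2 := congrArg Prod.snd hc
    by_cases hx : i ≤ x ∧ x ≤ j
    · have := (not_congr (hall (x - i) (by omega))).1 h0
      rw [show i + (x - i) = x by omega] at this
      rw [h1, (hone x).resolve_left this, smul_zero]
    · rw [h1, hPz x hx]; simp

end Helpers

section Normal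

variable {k : Type} [Field k] {n : ℕ} {ε : ℕ → Bool} {a b c d : ℕ}

/-- The image in the middle term of the generator of the sub. -/
def uvec (σ : SES (intervalRep k n ε (a + 1) b) (intervalRep k n ε (c + 1) d)) (x : ℕ) :
    σ.E.V x := σ.ι.app x (one k n ε (a + 1) b x)

variable (σ : SES (intervalRep k n ε (a + 1) b) (intervalRep k n ε (c + 1) d))

theorem uvec_zero {x : ℕ} (h : ¬SuppCond n (a + 1) b x) : uvec σ x = 0 := by
  unfold uvec; rw [V_zero h (one k n ε (a + 1) b x), map_zero]

theorem uvec_fwd {l : ℕ} (he : ε l = true) (h : SuppCond n (a + 1) b l) :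
    σ.E.fwd l (uvec σ l) = uvec σ (l + 1) := by
  unfold uvec; rw [← σ.ι.comm_fwd, fwd_one he h]

theorem uvec_bwd {l : ℕ} (he : ε l = false) (h : SuppCond n (a + 1) b (l + 1)) :
    σ.E.bwd l (uvec σ (l + 1)) = uvec σ l := by
  unfold uvec; rw [← σ.ι.comm_bwd, bwd_one he h]

theorem pi_uvec (x : ℕ) : σ.π.app x (uvec σ x) = 0 := (σ.exct x _).2 ⟨_, rfl⟩

theorem ker_pi {x : ℕ} {v : σ.E.V x} (h : σ.π.app x v = 0) : ∃ c : k, v = c • uvec σ x := by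
  obtain ⟨w, hw⟩ := (σ.exct x v).1 h
  refine ⟨coord k n ε (a + 1) b x w, ?_⟩
  unfold uvec
  rw [← map_smul, ← eq_smul_one, hw]

/-- A family of lifts of the generators of the quotient. -/
def IsLift (y : ∀ x, σ.E.V x) : Prop :=
  (∀ x, ¬SuppCond n (c + 1) d x → y x = 0) ∧
    ∀ x, σ.π.app x (y x) = one k n ε (c + 1) d x

/-- The defect equation of the lift `y` at the edge `l`, with scalar `η`. -/
def Defect (y : ∀ x, σ.E.V x) (l : ℕ) (η : k) : Prop :=
  (ε l = true → SuppCond n (c + 1) d l →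
      σ.E.fwd l (y l) = y (l + 1) + η • uvec σ (l + 1)) ∧
    (ε l = false → SuppCond n (c + 1) d (l + 1) →
      σ.E.bwd l (y (l + 1)) = y l + η • uvec σ l)

theorem exists_defect {y : ∀ x, σ.E.V x} (hy : IsLift σ y) (l : ℕ) :
    ∃ η : k, Defect σ y l η := by
  rcases he : ε l with _ | _
  · by_cases h : SuppCond n (c + 1) d (l + 1)
    · obtain ⟨η, hη⟩ := ker_pi σ (v := σ.E.bwd l (y (l + 1)) - y l)
        (by rw [map_sub, σ.π.comm_bwd, hy.2, hy.2, bwd_one he h, sub_self])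
      exact ⟨η, fun h => by simp [he] at h, fun _ _ => by rw [← hη]; abel⟩
    · exact ⟨0, fun h => by simp [he] at h, fun _ h' => absurd h' h⟩
  · by_cases h : SuppCond n (c + 1) d l
    · obtain ⟨η, hη⟩ := ker_pi σ (v := σ.E.fwd l (y l) - y (l + 1))
        (by rw [map_sub, σ.π.comm_fwd, hy.2, hy.2, fwd_one he h, sub_self])
      exact ⟨η, fun _ _ => by rw [← hη]; abel, fun h => by simp [he] at h⟩
    · exact ⟨0, fun _ h' => absurd h' h, fun h => by simp [he] at h⟩

theorem exists_lift : ∃ y, IsLift σ y := by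
  have : ∀ x, ∃ v : σ.E.V x, (¬SuppCond n (c + 1) d x → v = 0) ∧
      σ.π.app x v = one k n ε (c + 1) d x := by
    intro x
    by_cases h : SuppCond n (c + 1) d x
    · obtain ⟨v, hv⟩ := σ.surj x (one k n ε (c + 1) d x)
      exact ⟨v, fun h' => absurd h h', hv⟩
    · refine ⟨0, fun _ => rfl, ?_⟩
      rw [map_zero]; exact (V_zero h _).symm
  choose y hy using this
  exact ⟨y, fun x => (hy x).1, fun x => (hy x).2⟩

/-- Change of lift by scalars. -/
def shift (y : ∀ x, σ.E.V x) (T : ℕ → k) (x : ℕ) : σ.E.V x :=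
  if SuppCond n (c + 1) d x then y x + T x • uvec σ x else 0

theorem shift_lift {y : ∀ x, σ.E.V x} (hy : IsLift σ y) (T : ℕ → k) :
    IsLift σ (shift σ y T) := by
  refine ⟨fun x h => if_neg h, fun x => ?_⟩
  by_cases h : SuppCond n (c + 1) d x
  · rw [shift, if_pos h, map_add, map_smul, pi_uvec, hy.2]; simp
  · rw [shift, if_neg h, map_zero]; exact (V_zero h _).symm

/-- The defect of a shifted lift. -/
theorem shift_defect {y : ∀ x, σ.E.V x} (hy : IsLift σ y) (T : ℕ → k) (l : ℕ) (η η' : k)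
    (h : Defect σ y l η)
    (hf : ε l = true → SuppCond n (c + 1) d l → SuppCond n (a + 1) b (l + 1) →
      η' = η + (if SuppCond n (a + 1) b l then T l else 0) -
        (if SuppCond n (c + 1) d (l + 1) then T (l + 1) else 0))
    (hb : ε l = false → SuppCond n (c + 1) d (l + 1) → SuppCond n (a + 1) b l →
      η' = η + (if SuppCond n (a + 1) b (l + 1) then T (l + 1) else 0) -
        (if SuppCond n (c + 1) d l then T l else 0)) :
    Defect σ (shift σ y T) l η' := by
  have key : ∀ x, shift σ y T x = y x + (if SuppCond n (c + 1) d x then T x else 0) •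
      uvec σ x := by
    intro x
    by_cases h : SuppCond n (c + 1) d x
    · simp [shift, h]
    · simp [shift, h, hy.1 x h]
  constructor
  · intro he hs
    rw [key, key, map_add, h.1 he hs, map_smul, if_pos hs]
    have hu : σ.E.fwd l (uvec σ l) = (if SuppCond n (a + 1) b l then (1 : k) else 0) •
        uvec σ (l + 1) := by
      by_cases h1 : SuppCond n (a + 1) b l
      · rw [if_pos h1, one_smul, uvec_fwd σ he h1]
      · rw [if_neg h1, uvec_zero σ h1]; simp
    rw [hu]
    by_cases h2 : SuppCond n (a + 1) b (l + 1)
    · rw [hf he hs h2]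
      by_cases h1 : SuppCond n (a + 1) b l
      · simp only [if_pos h1]; module
      · simp only [if_neg h1]; module
    · rw [uvec_zero σ h2]; simp
  · intro he hs
    rw [key, key, map_add, h.2 he hs, map_smul, if_pos hs]
    have hu : σ.E.bwd l (uvec σ (l + 1)) =
        (if SuppCond n (a + 1) b (l + 1) then (1 : k) else 0) • uvec σ l := by
      by_cases h1 : SuppCond n (a + 1) b (l + 1)
      · rw [if_pos h1, one_smul, uvec_bwd σ he h1]
      · rw [if_neg h1, uvec_zero σ h1]; simp
    rw [hu]
    by_cases h2 : SuppCond n (a + 1) b l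
    · rw [hb he hs h2]
      by_cases h1 : SuppCond n (a + 1) b (l + 1)
      · simp only [if_pos h1]; module
      · simp only [if_neg h1]; module
    · rw [uvec_zero σ h2]; simp

/-- Normal form: all defects vanish except at the right end of the overlap. -/
theorem normal_form (hb : b ≤ n + 2) (hd : d ≤ n + 2) :
    ∃ y, IsLift σ y ∧ ∀ l, l ≠ min b d → Defect σ y l 0 := by
  obtain ⟨y, hy⟩ := exists_lift σ
  choose η hη using exists_defect σ hy
  let s : ℕ → k := fun l => if ε l = true then η l else -η l
  let T : ℕ → k := fun x => ∑ i ∈ Finset.Ico (max a c) x, s i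
  have hT0 : T (max a c) = 0 := by simp [T]
  have hTs : ∀ l, max a c ≤ l → T (l + 1) = T l + s l := fun l hl =>
    Finset.sum_Ico_succ_top hl s
  refine ⟨shift σ y T, shift_lift σ hy T, fun l hl => ?_⟩
  refine shift_defect σ hy T l (η l) 0 (hη l) ?_ ?_
  · intro he h1 h2
    have hs : s l = η l := if_pos he
    unfold SuppCond at h1 h2
    have h3 : SuppCond n (c + 1) d (l + 1) := by unfold SuppCond; omega
    have h4 := hTs l (by omega)
    rw [if_pos h3, h4, hs]
    by_cases h5 : SuppCond n (a + 1) b l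
    · rw [if_pos h5]; ring
    · have : l = max a c := by unfold SuppCond at h5; omega
      rw [if_neg h5, this, hT0]; ring
  · intro he h1 h2
    have hs : s l = -η l := if_neg (by simp [he])
    unfold SuppCond at h1 h2
    have h3 : SuppCond n (a + 1) b (l + 1) := by unfold SuppCond; omega
    have h4 := hTs l (by omega)
    rw [if_pos h3, h4, hs]
    by_cases h5 : SuppCond n (c + 1) d l
    · rw [if_pos h5]; ring
    · have : l = max a c := by unfold SuppCond at h5; omega
      rw [if_neg h5, this, hT0]; ring

theorem splits_of_lift {y : ∀ x, σ.E.V x} (hy : IsLift σ y) (h : ∀ l, Defect σ y l 0) :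
    σ.Splits := by
  refine splits_of_section σ (ofVec σ.E (c + 1) d y hy.1 ?_ ?_) ?_
  · intro l he hs
    have := (h l).1 he hs
    simpa using this
  · intro l he hs
    have := (h l).2 he hs
    simpa using this
  · intro x v
    rw [ofVec_app, map_smul, hy.2, ← eq_smul_one]

theorem isB_fiber {y : ∀ x, σ.E.V x} (hy : IsLift σ y) (x : ℕ) :
    IsB (k := k) (SuppCond n (a + 1) b x) (SuppCond n (c + 1) d x) (uvec σ x) (y x) := by
  refine ⟨uvec_zero σ, hy.1 x, fun v => ?_, fun α β h => ?_⟩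
  · have h1 : σ.π.app x v = coord k n ε (c + 1) d x (σ.π.app x v) • one k n ε (c + 1) d x :=
      eq_smul_one _
    set β := coord k n ε (c + 1) d x (σ.π.app x v)
    obtain ⟨α, hα⟩ := ker_pi σ (v := v - β • y x)
      (by rw [map_sub, map_smul, hy.2, h1, sub_self])
    exact ⟨α, β, by rw [← hα]; abel⟩
  · have h1 := congrArg (σ.π.app x) h
    rw [map_add, map_smul, map_smul, pi_uvec, hy.2, smul_zero, zero_add, map_zero] at h1
    have hβ : SuppCond n (c + 1) d x → β = 0 := fun hs =>
      (smul_eq_zero.1 h1).resolve_right (one_ne hs)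
    refine ⟨fun hs => ?_, hβ⟩
    have h2 : α • uvec σ x = 0 := by
      by_cases hs' : SuppCond n (c + 1) d x
      · rw [hβ hs'] at h; simpa using h
      · rw [hy.1 x hs'] at h; simpa using h
    refine (smul_eq_zero.1 h2).resolve_right fun h3 => one_ne (k := k) (ε := ε) hs ?_
    apply σ.inj x
    rw [map_zero]; exact h3

/-- The structure of a non-split extension. -/
theorem nonsplit_structure (hb : b ≤ n + 2) (hd : d ≤ n + 2) (hns : ¬σ.Splits) :
    ∃ y, ∃ lam : k, IsLift σ y ∧ (∀ l, l ≠ min b d → Defect σ y l 0) ∧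
      Defect σ y (min b d) lam ∧ lam ≠ 0 ∧
      ((b < d ∧ ε b = false ∧ c ≤ b) ∨ (d < b ∧ ε d = true ∧ a ≤ d)) ∧
      (max a c < min b d → (a < c ∧ ε c = false) ∨ (c < a ∧ ε a = true)) := by
  obtain ⟨y, hy, hy0⟩ := normal_form σ hb hd
  obtain ⟨lam, hlam⟩ := exists_defect σ hy (min b d)
  have hsplit : ¬Defect σ y (min b d) 0 := by
    intro h
    apply hns
    apply splits_of_lift σ hy
    intro l
    by_cases hl : l = min b d
    · rw [hl]; exact h
    · exact hy0 l hl
  have hr : (b < d ∧ ε b = false ∧ c ≤ b) ∨ (d < b ∧ ε d = true ∧ a ≤ d) := by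
    by_contra hcon
    apply hsplit
    constructor
    · intro he hs
      have : ¬SuppCond n (a + 1) b (min b d + 1) := by
        intro h
        apply hcon
        unfold SuppCond at h hs
        have hlt : d < b := by omega
        rw [min_eq_right hlt.le] at he
        exact Or.inr ⟨hlt, he, by omega⟩
      rw [hlam.1 he hs, uvec_zero σ this]; simp
    · intro he hs
      have : ¬SuppCond n (a + 1) b (min b d) := by
        intro h
        apply hcon
        unfold SuppCond at h hs
        have hlt : b < d := by omega
        rw [min_eq_left hlt.le] at he
        exact Or.inl ⟨hlt, he, by omega⟩
      rw [hlam.2 he hs, uvec_zero σ this]; simp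
  refine ⟨y, lam, hy, hy0, hlam, ?_, hr, ?_⟩
  · rintro rfl
    exact hsplit hlam
  · intro hJ
    by_contra hcon
    push Not at hcon
    apply hns
    let T : ℕ → k := fun _ => if b < d then lam else -lam
    have hT : ∀ x y, T x = T y := fun _ _ => rfl
    apply splits_of_lift σ (shift_lift σ hy T)
    intro l
    by_cases hl : l = min b d
    · subst hl
      refine shift_defect σ hy T _ lam 0 hlam ?_ ?_
      · intro he h1 h2
        unfold SuppCond at h1 h2
        have h3 : ¬SuppCond n (c + 1) d (min b d + 1) := by unfold SuppCond; omega
        have h4 : SuppCond n (a + 1) b (min b d) := by unfold SuppCond; omega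
        rw [if_neg h3, if_pos h4]
        have : ¬ b < d := by omega
        simp [T, this]
      · intro he h1 h2
        unfold SuppCond at h1 h2
        have h3 : ¬SuppCond n (a + 1) b (min b d + 1) := by unfold SuppCond; omega
        have h4 : SuppCond n (c + 1) d (min b d) := by unfold SuppCond; omega
        rw [if_neg h3, if_pos h4]
        have : b < d := by omega
        simp [T, this]
    · refine shift_defect σ hy T _ 0 0 (hy0 l hl) ?_ ?_
      · intro he h1 h2
        unfold SuppCond at h1 h2
        have h3 : SuppCond n (c + 1) d (l + 1) := by unfold SuppCond; omega
        have h4 : SuppCond n (a + 1) b l := by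
          unfold SuppCond
          by_contra h5
          have h6 : l = a := by omega
          exact hcon.2 (by omega) (h6 ▸ he)
        rw [if_pos h3, if_pos h4, hT (l + 1) l]; ring
      · intro he h1 h2
        unfold SuppCond at h1 h2
        have h3 : SuppCond n (a + 1) b (l + 1) := by unfold SuppCond; omega
        have h4 : SuppCond n (c + 1) d l := by
          unfold SuppCond
          by_contra h5
          have h6 : l = c := by omega
          exact hcon.1 (by omega) (h6 ▸ he)
        rw [if_pos h3, if_pos h4, hT (l + 1) l]; ring

/-- Nonzero morphism from the sub to the quotient. -/
theorem exists_hom (hb : b ≤ n + 2) (hd : d ≤ n + 2)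
    (hJ : max a c < min b d)
    (hl : (a < c ∧ ε c = false) ∨ (c < a ∧ ε a = true))
    (hr : (b < d ∧ ε b = false) ∨ (d < b ∧ ε d = true)) :
    ∃ f : (intervalRep k n ε (a + 1) b).Hom (intervalRep k n ε (c + 1) d),
        ∃ x v, f.app x v ≠ 0 := by
  let w : ∀ x, (intervalRep k n ε (c + 1) d).V x := fun x =>
    if SuppCond n (a + 1) b x then one k n ε (c + 1) d x else 0
  refine ⟨ofVec _ (a + 1) b w (fun x h => if_neg h) ?_ ?_, min b d, one k n ε (a + 1) b _, ?_⟩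
  · intro l he h
    have hw : w l = one k n ε (c + 1) d l := if_pos h
    rw [hw]
    by_cases h2 : SuppCond n (c + 1) d (l + 1)
    · have h1 : SuppCond n (c + 1) d l := by
        unfold SuppCond at h h2 ⊢
        by_contra h3
        have h4 : l = c := by omega
        rcases hl with hl | hl
        · rw [h4, hl.2] at he; simp at he
        · omega
      have h3 : SuppCond n (a + 1) b (l + 1) := by
        unfold SuppCond at h h2 ⊢
        by_contra h3
        have h4 : l = b := by omega
        rcases hr with hl | hl
        · rw [h4, hl.2] at he; simp at he
        · omega
      rw [fwd_one he h1]
      exact (if_pos h3).symm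
    · rw [V_zero h2 (w (l + 1))]; exact V_zero h2 _
  · intro l he h
    have hw : w (l + 1) = one k n ε (c + 1) d (l + 1) := if_pos h
    rw [hw]
    by_cases h2 : SuppCond n (c + 1) d l
    · have h1 : SuppCond n (c + 1) d (l + 1) := by
        unfold SuppCond at h h2 ⊢
        by_contra h3
        have h4 : l = d := by omega
        rcases hr with hl | hl
        · omega
        · rw [h4, hl.2] at he; simp at he
      have h3 : SuppCond n (a + 1) b l := by
        unfold SuppCond at h h2 ⊢
        by_contra h3
        have h4 : l = a := by omega
        rcases hl with hl | hl
        · omega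
        · rw [h4, hl.2] at he; simp at he
      rw [bwd_one he h1]
      exact (if_pos h3).symm
    · rw [V_zero h2 (w l)]; exact V_zero h2 _
  · have h1 : SuppCond n (a + 1) b (min b d) := by unfold SuppCond; omega
    have h2 : SuppCond n (c + 1) d (min b d) := by unfold SuppCond; omega
    have hw : w (min b d) = one k n ε (c + 1) d (min b d) := if_pos h1
    rw [ofVec_app, coord_one h1, one_smul, hw]
    exact one_ne h2

theorem overlap_of_hom
    (h : ∃ f : (intervalRep k n ε (a + 1) b).Hom (intervalRep k n ε (c + 1) d),
        ∃ x v, f.app x v ≠ 0) : max a c < min b d := by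
  obtain ⟨f, x, v, hv⟩ := h
  have h1 : SuppCond n (a + 1) b x := by
    by_contra h; apply hv; rw [V_zero h v, map_zero]
  have h2 : SuppCond n (c + 1) d x := by
    by_contra h; exact hv (V_zero h _)
  unfold SuppCond at h1 h2
  omega

theorem interval_ne {i j : ℕ} (h1 : 1 ≤ i) (h2 : i ≤ j) (h3 : j ≤ n + 2) :
    ¬(intervalRep k n ε i j).IsZero := by
  intro h
  exact one_ne (k := k) (ε := ε) (x := i) (by unfold SuppCond; omega) (h i _)

/-- No decomposition in the non-overlapping case. -/
theorem indec_of_disjoint (hab : a < b) (hb : b ≤ n + 2) (hcd : c < d) (hd : d ≤ n + 2)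
    (hns : ¬σ.Splits) (hJ : ¬max a c < min b d)
    (A B : ARep k n ε) (h : σ.E.Iso (A.dsum B)) : A.IsZero ∨ B.IsZero := by
  obtain ⟨y, lam, hy, hy0, hylam, hlam, hr, -⟩ := nonsplit_structure σ hb hd hns
  have hr' : (c = b ∧ ε b = false) ∨ (a = d ∧ ε d = true) := by
    rcases hr with ⟨h1, h2, h3⟩ | ⟨h1, h2, h3⟩
    · exact Or.inl ⟨by omega, h2⟩
    · exact Or.inr ⟨by omega, h2⟩
  have hD : ∀ l, ∃ μ, Defect σ y l μ ∧ (l = min b d → μ = lam) ∧ (l ≠ min b d → μ = 0) := by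
    intro l
    by_cases hl : l = min b d
    · exact ⟨lam, hl ▸ hylam, fun _ => rfl, fun h => absurd hl h⟩
    · exact ⟨0, hy0 l hl, fun h => absurd h hl, fun _ => rfl⟩
  refine not_decomp σ.E (min a c + 1) (max b d) (fun x => lam • uvec σ x + y x)
    ?_ ?_ ?_ ?_ ?_ A B h
  · intro x w
    obtain ⟨h1, h2, h3, h4⟩ := isB_fiber σ hy x
    obtain ⟨α, β, hw⟩ := h3 w
    by_cases hx : SuppCond n (a + 1) b x
    · have hx' : ¬SuppCond n (c + 1) d x := by unfold SuppCond at hx ⊢; omega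
      refine ⟨α / lam, ?_⟩
      rw [hw, h2 hx', smul_add, smul_smul, div_mul_cancel₀ _ hlam]; simp
    · refine ⟨β, ?_⟩
      rw [hw, h1 hx]; simp
  · intro x hx
    rw [uvec_zero σ (by unfold SuppCond; omega), hy.1 x (by unfold SuppCond; omega)]; simp
  · intro x hx1 hx2 h0
    obtain ⟨-, -, -, h4⟩ := isB_fiber σ hy x
    have h5 := h4 lam 1 (by rw [one_smul]; exact h0)
    by_cases hx : SuppCond n (a + 1) b x
    · exact hlam (h5.1 hx)
    · exact one_ne_zero (h5.2 (by unfold SuppCond at hx ⊢; omega))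
  · intro l he h1 h2
    obtain ⟨μ, hμ, hμ1, hμ2⟩ := hD l
    simp only [map_add, map_smul]
    by_cases hx : SuppCond n (c + 1) d l
    · have hx' : ¬SuppCond n (a + 1) b l := by unfold SuppCond at hx ⊢; omega
      rw [uvec_zero σ hx', hμ.1 he hx]
      by_cases hx2 : SuppCond n (a + 1) b (l + 1)
      · have : l = min b d := by unfold SuppCond at hx hx' hx2; omega
        rw [hμ1 this]; simp [add_comm]
      · rw [uvec_zero σ hx2]; simp
    · have hx' : SuppCond n (a + 1) b l := by unfold SuppCond at hx ⊢; omega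
      have hx2 : ¬SuppCond n (c + 1) d (l + 1) := by
        intro hx2
        unfold SuppCond at hx hx' hx2
        have h6 : l = b := by omega
        rcases hr' with h | h
        · rw [h6, h.2] at he; simp at he
        · omega
      rw [uvec_fwd σ he hx', hy.1 _ hx, hy.1 _ hx2, map_zero]
  · intro l he h1 h2
    obtain ⟨μ, hμ, hμ1, hμ2⟩ := hD l
    simp only [map_add, map_smul]
    by_cases hx : SuppCond n (c + 1) d (l + 1)
    · have hx' : ¬SuppCond n (a + 1) b (l + 1) := by unfold SuppCond at hx ⊢; omega
      rw [uvec_zero σ hx', hμ.2 he hx]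
      by_cases hx2 : SuppCond n (a + 1) b l
      · have : l = min b d := by unfold SuppCond at hx hx' hx2; omega
        rw [hμ1 this]; simp [add_comm]
      · rw [uvec_zero σ hx2]; simp
    · have hx' : SuppCond n (a + 1) b (l + 1) := by unfold SuppCond at hx ⊢; omega
      have hx2 : ¬SuppCond n (c + 1) d l := by
        intro hx2
        unfold SuppCond at hx hx' hx2
        have h6 : l = d := by omega
        rcases hr' with h | h
        · omega
        · rw [h6, h.2] at he; simp at he
      rw [uvec_bwd σ he hx', hy.1 _ hx, hy.1 _ hx2, map_zero]

end Normal

section Decomp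

variable {k : Type} [Field k] {n : ℕ} {ε : ℕ → Bool} {a b c d : ℕ}

theorem IsB.scale {V : Type} [AddCommGroup V] [Module k V] {P Q : Prop} {w z : V} {μ : k}
    (hμ : μ ≠ 0) (h : IsB (k := k) P Q w z) : IsB (k := k) P Q (μ • w) z := by
  obtain ⟨h1, h2, h3, h4⟩ := h
  refine ⟨fun hP => by rw [h1 hP, smul_zero], h2, fun v => ?_, fun α β h => ?_⟩
  · obtain ⟨α, β, h⟩ := h3 v
    exact ⟨α / μ, β, by rw [h, smul_smul, div_mul_cancel₀ _ hμ]⟩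
  · rw [smul_smul] at h
    refine ⟨fun hP => ?_, (h4 _ _ h).2⟩
    exact (mul_eq_zero.1 ((h4 _ _ h).1 hP)).resolve_right hμ

theorem IsB.iff {V : Type} [AddCommGroup V] [Module k V] {P Q P' Q' : Prop} {w z : V}
    (h : IsB (k := k) P Q w z) (hP : P ↔ P') (hQ : Q ↔ Q') : IsB (k := k) P' Q' w z := by
  rw [← propext hP, ← propext hQ]; exact h

/-- Decomposition of the middle term in the overlapping case. -/
theorem decomp_of_overlap
    (σ : SES (intervalRep k n ε (a + 1) b) (intervalRep k n ε (c + 1) d))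
    (hb : b ≤ n + 2) (hd : d ≤ n + 2) (hns : ¬σ.Splits) (hJ : max a c < min b d) :
    ∃ A B : ARep k n ε, ¬A.IsZero ∧ ¬B.IsZero ∧ σ.E.Iso (A.dsum B) := by
  obtain ⟨y, lam, hy, hy0, hylam, hlam, hr, hl'⟩ := nonsplit_structure σ hb hd hns
  have hl := hl' hJ
  obtain ⟨r, hrdef⟩ : ∃ r, r = min b d := ⟨_, rfl⟩
  obtain ⟨e, hedef⟩ : ∃ e, e = max a c := ⟨_, rfl⟩
  rw [← hrdef] at hy0 hylam
  have hrf : ε r = false → b < d := by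
    intro he
    rcases hr with h | h
    · exact h.1
    · rw [show r = d by omega, h.2.1] at he; simp at he
  have hrt : ε r = true → d < b := by
    intro he
    rcases hr with h | h
    · rw [show r = b by omega, h.2.1] at he; simp at he
    · exact h.1
  have hef : ε e = false → a < c := by
    intro he
    rcases hl with h | h
    · exact h.1
    · rw [show e = a by omega, h.2] at he; simp at he
  have het : ε e = true → c < a := by
    intro he
    rcases hl with h | h
    · rw [show e = c by omega, h.2] at he; simp at he
    · exact h.1
  have hbd : b ≠ d := by omega
  have hac : a ≠ c := by omega
  have hyf : ∀ l, l ≠ r → ε l = true → SuppCond n (c + 1) d l →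
      σ.E.fwd l (y l) = y (l + 1) := by
    intro l h1 h2 h3
    simpa using (hy0 l h1).1 h2 h3
  have hyb : ∀ l, l ≠ r → ε l = false → SuppCond n (c + 1) d (l + 1) →
      σ.E.bwd l (y (l + 1)) = y l := by
    intro l h1 h2 h3
    simpa using (hy0 l h1).2 h2 h3
  obtain ⟨μ, hμdef⟩ : ∃ μ : k, μ = if b < d then lam else -lam := ⟨_, rfl⟩
  have hμ : μ ≠ 0 := by
    rw [hμdef]; split_ifs
    · exact hlam
    · exact neg_ne_zero.2 hlam
  let w : ∀ x, σ.E.V x := fun x => if x ≤ r then y x else lam • uvec σ x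
  let z : ∀ x, σ.E.V x := fun x =>
    if x ≤ e then μ • uvec σ x else if x ≤ r then y x + μ • uvec σ x else y x
  have w1 : ∀ x, x ≤ r → w x = y x := fun x h => if_pos h
  have w2 : ∀ x, r < x → w x = lam • uvec σ x := fun x h => if_neg (by omega)
  have z1 : ∀ x, x ≤ e → z x = μ • uvec σ x := fun x h => if_pos h
  have z2 : ∀ x, e < x → x ≤ r → z x = y x + μ • uvec σ x := fun x h h' =>
    (if_neg (by omega)).trans (if_pos h')
  have z3 : ∀ x, r < x → z x = y x := fun x h =>
    (if_neg (by omega)).trans (if_neg (by omega))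
  have hIB : ∀ x, IsB (k := k) (SuppCond n (c + 1) b x) (SuppCond n (a + 1) d x)
      (w x) (z x) := by
    intro x
    have hB := isB_fiber σ hy x
    by_cases h1 : x ≤ e
    · rw [w1 x (by omega), z1 x h1]
      refine (hB.scale hμ).swap.iff ?_ ?_ <;> (unfold SuppCond; omega)
    · by_cases h2 : x ≤ r
      · rw [w1 x h2, z2 x (by omega) h2]
        have hB' : IsB (k := k) True True (uvec σ x) (y x) := by
          refine hB.iff ?_ ?_ <;> (unfold SuppCond; simp; omega)
        refine (hB'.shear hμ).iff ?_ ?_ <;> (unfold SuppCond; simp; omega)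
      · rw [w2 x (by omega), z3 x (by omega)]
        refine (hB.scale hlam).iff ?_ ?_ <;> (unfold SuppCond; omega)
  refine ⟨intervalRep k n ε (c + 1) b, intervalRep k n ε (a + 1) d,
    interval_ne (by omega) (by omega) hb, interval_ne (by omega) (by omega) hd, ?_⟩
  refine iso_of_isB σ.E (ofVec σ.E (c + 1) b w (fun x h => (hIB x).1 h) ?_ ?_)
    (ofVec σ.E (a + 1) d z (fun x h => (hIB x).2.1 h) ?_ ?_) w z
    (fun x v => rfl) (fun x v => rfl) hIB
  · intro l he hs
    unfold SuppCond at hs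
    rcases lt_trichotomy l r with h | h | h
    · rw [w1 l h.le, w1 (l + 1) h]
      exact hyf l h.ne he (by unfold SuppCond; omega)
    · subst h
      have := hrt he
      rw [w1 l le_rfl, w2 (l + 1) (by omega), hylam.1 he (by unfold SuppCond; omega),
        hy.1 (l + 1) (by unfold SuppCond; omega), zero_add]
    · rw [w2 l h, w2 (l + 1) (by omega), map_smul, uvec_fwd σ he (by unfold SuppCond; omega)]
  · intro l he hs
    unfold SuppCond at hs
    rcases lt_trichotomy l r with h | h | h
    · rw [w1 l h.le, w1 (l + 1) h]
      exact hyb l h.ne he (by unfold SuppCond; omega)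
    · subst h
      have := hrf he
      omega
    · rw [w2 l h, w2 (l + 1) (by omega), map_smul, uvec_bwd σ he (by unfold SuppCond; omega)]
  · intro l he hs
    unfold SuppCond at hs
    rcases lt_trichotomy l e with h | h | h
    · rw [z1 l h.le, z1 (l + 1) h, map_smul, uvec_fwd σ he (by unfold SuppCond; omega)]
    · subst h
      have := het he
      omega
    · rcases lt_trichotomy l r with h' | h' | h'
      · rw [z2 l h h'.le, z2 (l + 1) (by omega) h', map_add, map_smul,
          uvec_fwd σ he (by unfold SuppCond; omega),
          hyf l h'.ne he (by unfold SuppCond; omega)]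
      · subst h'
        have h1 := hrt he
        have h2 : μ = -lam := by rw [hμdef, if_neg (by omega)]
        rw [z2 l h le_rfl, z3 (l + 1) (by omega), map_add, map_smul,
          uvec_fwd σ he (by unfold SuppCond; omega),
          hylam.1 he (by unfold SuppCond; omega), h2]
        module
      · rw [z3 l h', z3 (l + 1) (by omega)]
        exact hyf l h'.ne' he (by unfold SuppCond; omega)
  · intro l he hs
    unfold SuppCond at hs
    rcases lt_trichotomy l e with h | h | h
    · rw [z1 l h.le, z1 (l + 1) h, map_smul, uvec_bwd σ he (by unfold SuppCond; omega)]
    · subst h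
      have h1 := hef he
      rw [z1 l le_rfl, z2 (l + 1) (by omega) (by omega), map_add, map_smul,
        uvec_bwd σ he (by unfold SuppCond; omega),
        hyb l (by omega) he (by unfold SuppCond; omega),
        hy.1 l (by unfold SuppCond; omega), zero_add]
    · rcases lt_trichotomy l r with h' | h' | h'
      · rw [z2 l h h'.le, z2 (l + 1) (by omega) h', map_add, map_smul,
          uvec_bwd σ he (by unfold SuppCond; omega),
          hyb l h'.ne he (by unfold SuppCond; omega)]
      · subst h'
        have h1 := hrf he
        have h2 : μ = lam := by rw [hμdef, if_pos h1]
        rw [z2 l h le_rfl, z3 (l + 1) (by omega), h2,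
          hylam.2 he (by unfold SuppCond; omega)]
      · rw [z3 l h', z3 (l + 1) (by omega)]
        exact hyb l h'.ne' he (by unfold SuppCond; omega)

end Decomp


section Geometry

/-- The height at abscissa `x` of the line through the points of the pair `e`. -/
def lineAt (p : ℕ → ℂ) (e : ℕ × ℕ) (x : ℝ) : ℝ :=
  (p e.1).im + slope p e * (x - (p e.1).re)

theorem lineAt_left (p : ℕ → ℂ) (e : ℕ × ℕ) : lineAt p e (p e.1).re = (p e.1).im := by
  simp [lineAt]

theorem lineAt_right (p : ℕ → ℂ) (e : ℕ × ℕ) (h : (p e.1).re < (p e.2).re) :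
    lineAt p e (p e.2).re = (p e.2).im := by
  have : (p e.2).re - (p e.1).re ≠ 0 := by linarith
  simp only [lineAt, slope]
  field_simp
  ring

theorem mem_seg_of_lineAt (p : ℕ → ℂ) (e : ℕ × ℕ) (h : (p e.1).re < (p e.2).re) (x : ℝ)
    (h1 : (p e.1).re ≤ x) (h2 : x ≤ (p e.2).re) :
    (⟨x, lineAt p e x⟩ : ℂ) ∈ Seg p e := by
  have hpos : 0 < (p e.2).re - (p e.1).re := by linarith
  have hne := hpos.ne'
  unfold Seg
  rw [segment_eq_image]
  refine ⟨(x - (p e.1).re) / ((p e.2).re - (p e.1).re),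
    ⟨div_nonneg (by linarith) hpos.le, (div_le_one hpos).2 (by linarith)⟩, ?_⟩
  apply Complex.ext
  · simp only [Complex.add_re, Complex.real_smul, Complex.mul_re, Complex.ofReal_re,
      Complex.ofReal_im, zero_mul, sub_zero]
    field_simp
    ring
  · simp only [Complex.add_im, Complex.real_smul, Complex.mul_im, Complex.ofReal_re,
      Complex.ofReal_im, zero_mul, add_zero, lineAt, slope]
    field_simp
    ring

/-- A point strictly between two points of a convex set on a vertical line. -/
theorem mem_of_vertical {C : Set ℂ} (hC : Convex ℝ C) (x y1 y2 y : ℝ)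
    (h1 : (⟨x, y1⟩ : ℂ) ∈ C) (h2 : (⟨x, y2⟩ : ℂ) ∈ C) (h3 : y1 ≤ y) (h4 : y < y2) :
    (⟨x, y⟩ : ℂ) ∈ C := by
  have hpos : 0 < y2 - y1 := by linarith
  have hne := hpos.ne'
  apply hC.segment_subset h1 h2
  rw [segment_eq_image]
  refine ⟨(y - y1) / (y2 - y1),
    ⟨div_nonneg (by linarith) hpos.le, (div_le_one hpos).2 (by linarith)⟩, ?_⟩
  apply Complex.ext
  · simp only [Complex.add_re, Complex.real_smul, Complex.mul_re, Complex.ofReal_re,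
      Complex.ofReal_im, zero_mul, sub_zero]
    ring
  · simp only [Complex.add_im, Complex.real_smul, Complex.mul_im, Complex.ofReal_re,
      Complex.ofReal_im, zero_mul, add_zero]
    field_simp
    ring

theorem mem_of_vertical' {C : Set ℂ} (hC : Convex ℝ C) (x y1 y2 y : ℝ)
    (h1 : (⟨x, y1⟩ : ℂ) ∈ C) (h2 : (⟨x, y2⟩ : ℂ) ∈ C) (h3 : y2 < y) (h4 : y ≤ y1) :
    (⟨x, y⟩ : ℂ) ∈ C := by
  have hpos : 0 < y1 - y2 := by linarith
  have hne := hpos.ne'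
  apply hC.segment_subset h1 h2
  rw [segment_eq_image]
  refine ⟨(y1 - y) / (y1 - y2),
    ⟨div_nonneg (by linarith) hpos.le, (div_le_one hpos).2 (by linarith)⟩, ?_⟩
  apply Complex.ext
  · simp only [Complex.add_re, Complex.real_smul, Complex.mul_re, Complex.ofReal_re,
      Complex.ofReal_im, zero_mul, sub_zero]
    ring
  · simp only [Complex.add_im, Complex.real_smul, Complex.mul_im, Complex.ofReal_re,
      Complex.ofReal_im, zero_mul, add_zero]
    field_simp
    ring

variable {n : ℕ} {ε : ℕ → Bool} {p : ℕ → ℂ}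

theorem seg_sub_hull (hp : PolyPts n ε p) {i j l : ℕ} (hij : i < j) (hjl : j < l)
    (hl : l ≤ n + 2) :
    (⟨(p j).re, lineAt p (i, l) (p j).re⟩ : ℂ) ∈
      convexHull ℝ (p '' {m | m ≤ n + 2 ∧ m ≠ j}) := by
  have hm : (⟨(p j).re, lineAt p (i, l) (p j).re⟩ : ℂ) ∈ Seg p (i, l) := by
    apply mem_seg_of_lineAt
    · exact hp.1 i l (by omega) hl
    · exact (hp.1 i j hij (by omega)).le
    · exact (hp.1 j l hjl hl).le
  refine (convex_convexHull ℝ _).segment_subset ?_ ?_ hm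
  · exact subset_convexHull ℝ _ ⟨i, ⟨by omega, by omega⟩, rfl⟩
  · exact subset_convexHull ℝ _ ⟨l, ⟨by omega, by omega⟩, rfl⟩

theorem lineAt_base (hp : PolyPts n ε p) (x : ℝ) :
    lineAt p (0, n + 2) x = (p 0).im := by
  simp [lineAt, slope, hp.2.1]

theorem below (hp : PolyPts n ε p) {i j l : ℕ} (hij : i < j) (hjl : j < l)
    (hl : l ≤ n + 2) (he : ε j = false) : (p j).im < lineAt p (i, l) (p j).re := by
  by_contra hcon
  push Not at hcon
  have h1 := seg_sub_hull hp hij hjl hl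
  have h2 := seg_sub_hull hp (show 0 < j by omega) (show j < n + 2 by omega) le_rfl
  rw [lineAt_base hp] at h2
  have h3 := (hp.2.2.1 j (by omega) (by omega)).2 he
  exact hp.2.2.2 j (by omega) (mem_of_vertical (convex_convexHull ℝ _) _ _ _ _ h1 h2 hcon h3)

theorem above (hp : PolyPts n ε p) {i j l : ℕ} (hij : i < j) (hjl : j < l)
    (hl : l ≤ n + 2) (he : ε j = true) : lineAt p (i, l) (p j).re < (p j).im := by
  by_contra hcon
  push Not at hcon
  have h1 := seg_sub_hull hp hij hjl hl
  have h2 := seg_sub_hull hp (show 0 < j by omega) (show j < n + 2 by omega) le_rfl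
  rw [lineAt_base hp] at h2
  have h3 := (hp.2.2.1 j (by omega) (by omega)).1 he
  exact hp.2.2.2 j (by omega) (mem_of_vertical' (convex_convexHull ℝ _) _ _ _ _ h1 h2 h3 hcon)

theorem cross_of_lines {e f : ℕ × ℕ} (he : (p e.1).re < (p e.2).re)
    (hf : (p f.1).re < (p f.2).re) (x1 x2 : ℝ) (hx : x1 < x2)
    (h1 : (p e.1).re ≤ x1) (h2 : (p f.1).re ≤ x1) (h3 : x2 ≤ (p e.2).re)
    (h4 : x2 ≤ (p f.2).re) (hl : lineAt p f x1 < lineAt p e x1)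
    (hr : lineAt p e x2 < lineAt p f x2) : Cross p e f ∧ slope p e < slope p f := by
  have hs : slope p e < slope p f := by
    simp only [lineAt] at hl hr
    by_contra hcon
    push Not at hcon
    nlinarith [mul_nonneg (sub_nonneg.2 hcon) (sub_nonneg.2 hx.le)]
  refine ⟨?_, hs⟩
  -- the intersection abscissa
  set D := slope p f - slope p e with hD
  have hDpos : 0 < D := by rw [hD]; linarith
  set x := x1 + (lineAt p e x1 - lineAt p f x1) / D with hxdef
  have hxD : (x - x1) * D = lineAt p e x1 - lineAt p f x1 := by
    rw [hxdef]; field_simp; ring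
  have hgt : x1 < x := by
    rw [hxdef]
    have : 0 < (lineAt p e x1 - lineAt p f x1) / D := div_pos (by linarith) hDpos
    linarith
  have e2 : lineAt p e x2 = lineAt p e x1 + slope p e * (x2 - x1) := by
    simp only [lineAt]; ring
  have f2 : lineAt p f x2 = lineAt p f x1 + slope p f * (x2 - x1) := by
    simp only [lineAt]; ring
  have ex : lineAt p e x = lineAt p e x1 + slope p e * (x - x1) := by
    simp only [lineAt]; ring
  have fx : lineAt p f x = lineAt p f x1 + slope p f * (x - x1) := by
    simp only [lineAt]; ring
  have hlt : x < x2 := by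
    have : (x - x1) * D < (x2 - x1) * D := by
      rw [hxD, hD]; rw [e2, f2] at hr; linarith
    have := lt_of_mul_lt_mul_right this hDpos.le
    linarith
  have heq : lineAt p e x = lineAt p f x := by
    rw [ex, fx]; rw [hD] at hxD; linarith
  refine ⟨⟨x, lineAt p e x⟩, mem_seg_of_lineAt p e he x (by linarith) (by linarith), ?_, ?_⟩
  · rw [heq]; exact mem_seg_of_lineAt p f hf x (by linarith) (by linarith)
  · rintro ⟨h | h, -⟩
    · have := congrArg Complex.re h
      simp only at this; linarith
    · have := congrArg Complex.re h
      simp only at this; linarith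

theorem cross_of_ext (hp : PolyPts n ε p) {a b c d : ℕ} (hb : b ≤ n + 2) (hd : d ≤ n + 2)
    (hac : max a c < min b d)
    (hl : (a < c ∧ ε c = false) ∨ (c < a ∧ ε a = true))
    (hr : (b < d ∧ ε b = false) ∨ (d < b ∧ ε d = true)) :
    Cross p (a, b) (c, d) ∧ slope p (a, b) < slope p (c, d) := by
  have hmon : ∀ x y, x ≤ y → y ≤ n + 2 → (p x).re ≤ (p y).re := by
    intro x y hxy hy
    rcases hxy.lt_or_eq with h | h
    · exact (hp.1 x y h hy).le
    · rw [h]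
  have hab : (p a).re < (p b).re := hp.1 a b (by omega) hb
  have hcd : (p c).re < (p d).re := hp.1 c d (by omega) hd
  refine cross_of_lines (e := (a, b)) (f := (c, d)) hab hcd (p (max a c)).re (p (min b d)).re
    (hp.1 _ _ hac (by omega)) (hmon _ _ (by omega) (by omega)) (hmon _ _ (by omega) (by omega))
    (hmon _ _ (by omega) (by omega)) (hmon _ _ (by omega) (by omega)) ?_ ?_
  · rcases hl with ⟨h1, h2⟩ | ⟨h1, h2⟩
    · rw [max_eq_right h1.le]
      have := lineAt_left p (c, d)
      simp only at this
      rw [this]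
      exact below hp h1 (by omega) hb h2
    · rw [max_eq_left h1.le]
      have := lineAt_left p (a, b)
      simp only at this
      rw [this]
      exact above hp h1 (by omega) hd h2
  · rcases hr with ⟨h1, h2⟩ | ⟨h1, h2⟩
    · rw [min_eq_left h1.le]
      have := lineAt_right p (a, b) hab
      simp only at this
      rw [this]
      exact below hp (by omega) h1 hd h2
    · rw [min_eq_right h1.le]
      have := lineAt_right p (c, d) hcd
      simp only at this
      rw [this]
      exact above hp (by omega) h1 hb h2

theorem seg_re (x y z : ℂ) (hxy : x.re < y.re) (hz : z ∈ segment ℝ x y) :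
    x.re ≤ z.re ∧ z.re ≤ y.re ∧ (z.re = x.re → z = x) ∧ (z.re = y.re → z = y) := by
  rw [segment_eq_image] at hz
  obtain ⟨t, ⟨h0, h1⟩, rfl⟩ := hz
  have hre : ((1 - t) • x + t • y).re = x.re + t * (y.re - x.re) := by
    simp; ring
  have hpos : 0 < y.re - x.re := by linarith
  simp only [hre]
  refine ⟨by nlinarith, by nlinarith, fun h => ?_, fun h => ?_⟩
  · have : t = 0 := by
      have : t * (y.re - x.re) = 0 := by linarith
      exact (mul_eq_zero.1 this).resolve_right hpos.ne'
    simp [this]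
  · have : t = 1 := by
      have : (1 - t) * (y.re - x.re) = 0 := by linarith
      have := (mul_eq_zero.1 this).resolve_right hpos.ne'
      linarith
    simp [this]

theorem no_cross (hp : PolyPts n ε p) {a b c d : ℕ} (hab : a < b) (hcd : c < d)
    (hd : d ≤ n + 2) (hbc : b ≤ c) (z : ℂ) (h1 : z ∈ Seg p (a, b)) (h2 : z ∈ Seg p (c, d)) :
    z = p b ∧ z = p c := by
  obtain ⟨-, h3, -, h4⟩ := seg_re _ _ _ (hp.1 a b hab (by omega)) h1
  obtain ⟨h5, -, h6, -⟩ := seg_re _ _ _ (hp.1 c d hcd (by omega)) h2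
  rcases hbc.lt_or_eq with h | h
  · have := hp.1 b c h (by omega)
    linarith
  · subst h
    have : z.re = (p b).re := le_antisymm h3 h5
    exact ⟨h4 this, h6 this⟩

theorem overlap_of_cross (hp : PolyPts n ε p) {a b c d : ℕ} (hab : a < b) (hb : b ≤ n + 2)
    (hcd : c < d) (hd : d ≤ n + 2) (h : Cross p (a, b) (c, d)) : max a c < min b d := by
  obtain ⟨z, h1, h2, h3⟩ := h
  by_contra hcon
  have : b ≤ c ∨ d ≤ a := by omega
  rcases this with h | h
  · have := no_cross hp hab hcd hd h z h1 h2
    exact h3 ⟨Or.inr this.1, Or.inl this.2⟩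
  · have := no_cross hp hcd hab hb h z h2 h1
    exact h3 ⟨Or.inl this.2, Or.inr this.1⟩

end Geometry

/-- for a non-split sequence `0 → M₁ → E → M₂ → 0` with `M₁ = M(a+1,b)`,
`M₂ = M(c+1,d)`, TFAE: `Hom(M₁,M₂) ≠ 0`; `E` decomposable; `γ(a,b)` and `γ(c,d)` cross
and the slope of `γ(c,d)` is larger than the slope of `γ(a,b)`. -/
theorem stmt_14 (k : Type) [Field k] (n : ℕ) (ε : ℕ → Bool) (p : ℕ → ℂ)
    (hp : PolyPts n ε p) (a b c d : ℕ)
    (hab : a < b) (hb : b ≤ n + 2) (hcd : c < d) (hd : d ≤ n + 2)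
    (σ : SES (intervalRep k n ε (a + 1) b) (intervalRep k n ε (c + 1) d))
    (hns : ¬σ.Splits) :
    ((∃ f : (intervalRep k n ε (a + 1) b).Hom (intervalRep k n ε (c + 1) d),
        ∃ x v, f.app x v ≠ 0) ↔
      (∃ A B : ARep k n ε, ¬A.IsZero ∧ ¬B.IsZero ∧ σ.E.Iso (A.dsum B))) ∧
    ((∃ A B : ARep k n ε, ¬A.IsZero ∧ ¬B.IsZero ∧ σ.E.Iso (A.dsum B)) ↔
      (Cross p (a, b) (c, d) ∧ slope p (a, b) < slope p (c, d))) := by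
  have key : ∀ hJ : max a c < min b d,
      ((a < c ∧ ε c = false) ∨ (c < a ∧ ε a = true)) ∧
        ((b < d ∧ ε b = false) ∨ (d < b ∧ ε d = true)) := by
    intro hJ
    obtain ⟨y, lam, -, -, -, -, hr, hl⟩ := nonsplit_structure σ hb hd hns
    refine ⟨hl hJ, ?_⟩
    rcases hr with h | h
    · exact Or.inl ⟨h.1, h.2.1⟩
    · exact Or.inr ⟨h.1, h.2.1⟩
  have h1 : (∃ f : (intervalRep k n ε (a + 1) b).Hom (intervalRep k n ε (c + 1) d),
        ∃ x v, f.app x v ≠ 0) ↔ max a c < min b d :=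
    ⟨overlap_of_hom, fun hJ => exists_hom hb hd hJ (key hJ).1 (key hJ).2⟩
  have h2 : (∃ A B : ARep k n ε, ¬A.IsZero ∧ ¬B.IsZero ∧ σ.E.Iso (A.dsum B)) ↔
      max a c < min b d := by
    refine ⟨?_, decomp_of_overlap σ hb hd hns⟩
    rintro ⟨A, B, hA, hB, hiso⟩
    by_contra hJ
    rcases indec_of_disjoint σ hab hb hcd hd hns hJ A B hiso with h | h
    · exact hA h
    · exact hB h
  have h3 : (Cross p (a, b) (c, d) ∧ slope p (a, b) < slope p (c, d)) ↔
      max a c < min b d :=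
    ⟨fun h => overlap_of_cross hp hab hb hcd hd h.1,
      fun hJ => cross_of_ext hp hb hd hJ (key hJ).1 (key hJ).2⟩
  exact ⟨h1.trans h2.symm, h2.trans h3.symm⟩

end CambrianA
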